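/- The order of the symplectic group Sp(2m, F_2) is 2^{m²} · ∏_{j=1}^{m} (4^j − 1). -/

import Mathlib

/-! The rows of a symplectic matrix form a symplectic basis of the standard alternating space, so
the order of the group is the number of symplectic bases. Such a basis is built one hyperbolic pair
at a time. In a nondegenerate alternating space of dimension `2n` over a field with `q` elements
there are `q ^ (2n) - 1` choices for the first vector `e` of a pair and, the solutions `f` of
`B e f = 1` forming an affine hyperplane, `q ^ (2n - 1)` choices for the second. The other pairs lie
in the orthogonal complement of the hyperbolic plane spanned by `e` and `f`, which is again
nondegenerate, of dimension `2(n - 1)`.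
-/

open Matrix

/-- The symplectic form matrix `Ω = [[0, I_m],[I_m, 0]]` over `F_2`. -/
def Om (m : ℕ) : Matrix (Fin m ⊕ Fin m) (Fin m ⊕ Fin m) (ZMod 2) :=
  Matrix.fromBlocks 0 1 1 0

open LinearMap (BilinForm)
open Module (Dual finrank)
open Submodule (span)

lemma natCard_sigma_of_forall_eq {α : Type*} {β : α → Type*} [Finite α] [∀ a, Finite (β a)] {c : ℕ}
    (h : ∀ a, Nat.card (β a) = c) : Nat.card (Σ a, β a) = Nat.card α * c := by
  have := Fintype.ofFinite α
  rw [Nat.card_sigma, Finset.sum_congr rfl fun a _ ↦ h a, Finset.sum_const, smul_eq_mul,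
    Finset.card_univ, Nat.card_eq_fintype_card]

section CountingSolutions

variable {K V W : Type*} [Field K] [AddCommGroup V] [Module K V] [AddCommGroup W] [Module K W]

lemma natCard_dual_apply_eq [Module.Finite K V] {f : Dual K V} (hf : f ≠ 0) (c : K) :
    Nat.card {v // f v = c} = Nat.card K ^ (finrank K V - 1) := by
  have fiberEquivKer : {v // f v = c} ≃ LinearMap.ker f :=
    AddMonoidHom.fiberEquivKerOfSurjective (f := f.toAddMonoidHom) (f.surjective hf) c
  rw [Nat.card_congr fiberEquivKer, Module.natCard_eq_pow_finrank (K := K),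
    ← Module.Dual.finrank_ker_add_one_of_ne_zero hf, Nat.add_sub_cancel]

lemma natCard_pairs_apply_eq_one [Finite V] [Finite W] {B : V →ₗ[K] W →ₗ[K] K}
    (hB : B.SeparatingLeft) :
    Nat.card {q : V × W // B q.1 q.2 = 1} = (Nat.card V - 1) * Nat.card K ^ (finrank K W - 1) := by
  have := Module.Finite.of_finite (R := K) (M := W)
  let fiberwise : {q : V × W // B q.1 q.2 = 1} ≃ Σ v : {v : V // v ≠ 0}, {w // B v w = 1} :=
    { toFun q := ⟨⟨q.1.1, fun h ↦ by simpa [h] using q.2⟩, q.1.2, q.2⟩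
      invFun s := ⟨(s.1, s.2), s.2.2⟩ }
  have card_fiber (v : {v : V // v ≠ 0}) :
      Nat.card {w // B v w = 1} = Nat.card K ^ (finrank K W - 1) :=
    natCard_dual_apply_eq (mt (LinearMap.separatingLeft_iff_linear_nontrivial.mp hB v) v.2) 1
  have card_ne_zero : Nat.card {v : V // v ≠ 0} = Nat.card V - 1 := by
    rw [← Set.ncard_singleton (0 : V), ← Set.ncard_compl]
    rfl
  rw [Nat.card_congr fiberwise, natCard_sigma_of_forall_eq card_fiber, card_ne_zero]

end CountingSolutions

section HyperbolicPlane

variable {R M : Type*} [CommRing R] [AddCommGroup M] [Module R M] {B : BilinForm R M} {u v : M}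

lemma mem_orthogonal_span_pair {x : M} :
    x ∈ B.orthogonal (span R {u, v}) ↔ B u x = 0 ∧ B v x = 0 := by
  refine ⟨fun h ↦ ⟨h u (Submodule.mem_span_of_mem (by simp)),
    h v (Submodule.mem_span_of_mem (by simp))⟩, fun ⟨hu, hv⟩ y hy ↦ ?_⟩
  obtain ⟨a, b, rfl⟩ := Submodule.mem_span_pair.mp hy
  simp [hu, hv]

lemma eq_zero_of_apply_combination_eq_zero (hB : B.IsAlt) (huv : B u v = 1) {a b : R}
    (hu : B u (a • u + b • v) = 0) (hv : B v (a • u + b • v) = 0) : a = 0 ∧ b = 0 := by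
  have hvu : B v u = -1 := by rw [← hB.neg_eq, huv]
  exact ⟨by simpa [hB.self_eq_zero, hvu] using hv, by simpa [hB.self_eq_zero, huv] using hu⟩

lemma disjoint_orthogonal_span_pair (hB : B.IsAlt) (huv : B u v = 1) :
    Disjoint (span R {u, v}) (B.orthogonal (span R {u, v})) := by
  refine Submodule.disjoint_def.mpr fun x hx hx' ↦ ?_
  obtain ⟨a, b, rfl⟩ := Submodule.mem_span_pair.mp hx
  obtain ⟨hu, hv⟩ := mem_orthogonal_span_pair.mp hx'
  obtain ⟨rfl, rfl⟩ := eq_zero_of_apply_combination_eq_zero hB huv hu hv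
  simp

lemma finrank_span_pair_of_apply_eq_one [Nontrivial R] (hB : B.IsAlt) (huv : B u v = 1) :
    finrank R (span R {u, v}) = 2 := by
  have independent : LinearIndependent R ![u, v] := LinearIndependent.pair_iff.mpr fun a b h ↦
    eq_zero_of_apply_combination_eq_zero hB huv (by simp [h]) (by simp [h])
  rw [← range_cons_cons_empty u v ![], finrank_span_eq_card independent, Fintype.card_fin]

end HyperbolicPlane

section OrthogonalComplement

variable {K V : Type*} [Field K] [AddCommGroup V] [Module K V] [FiniteDimensional K V]
  {B : BilinForm K V}

lemma nondegenerate_restrict_orthogonal {W : Submodule K V} (hB : B.Nondegenerate)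
    (hrefl : B.IsRefl) (hW : Disjoint W (B.orthogonal W)) :
    (B.restrict (B.orthogonal W)).Nondegenerate := by
  apply B.nondegenerate_restrict_of_disjoint_orthogonal hrefl
  rw [LinearMap.BilinForm.orthogonal_orthogonal hB hrefl]
  exact hW.symm

lemma finrank_orthogonal_span_pair {u v : V} (hB : B.Nondegenerate) (halt : B.IsAlt)
    (huv : B u v = 1) :
    finrank K (B.orthogonal (span K {u, v})) = finrank K V - 2 := by
  rw [LinearMap.BilinForm.finrank_orthogonal hB, finrank_span_pair_of_apply_eq_one halt huv]

end OrthogonalComplement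

section SymplecticFamily

variable {R M ι κ : Type*} [CommRing R] [AddCommGroup M] [Module R M]

/-- Orthogonality, with respect to `B`, of the pairs `q` and `r`: both vectors of `r` are orthogonal
to both vectors of `q`. -/
def IsOrthoPair (B : BilinForm R M) (q r : M × M) : Prop :=
  (B q.1 r.1 = 0 ∧ B q.2 r.1 = 0) ∧ (B q.1 r.2 = 0 ∧ B q.2 r.2 = 0)

lemma IsOrthoPair.symm {B : BilinForm R M} (hB : B.IsRefl) {q r : M × M} (h : IsOrthoPair B q r) :
    IsOrthoPair B r q :=
  ⟨⟨hB _ _ h.1.1, hB _ _ h.2.1⟩, hB _ _ h.1.2, hB _ _ h.2.2⟩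

lemma isOrthoPair_iff_mem_orthogonal {B : BilinForm R M} {q r : M × M} :
    IsOrthoPair B q r ↔ r.1 ∈ B.orthogonal (span R {q.1, q.2}) ∧
      r.2 ∈ B.orthogonal (span R {q.1, q.2}) := by
  simp only [mem_orthogonal_span_pair, IsOrthoPair]

/-- A symplectic family for `B`: mutually orthogonal pairs `(eᵢ, fᵢ)` with `B eᵢ fᵢ = 1`. When `B`
is alternating and the number of pairs is half the dimension of `M`, this is a symplectic basis of
`M`. -/
structure IsSymplecticFamily (B : BilinForm R M) (p : ι → M × M) : Prop where
  apply_eq_one : ∀ i, B (p i).1 (p i).2 = 1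
  pairwise : Pairwise fun i j ↦ IsOrthoPair B (p i) (p j)

namespace IsSymplecticFamily

variable {B : BilinForm R M}

lemma comp_injective {p : ι → M × M} (hp : IsSymplecticFamily B p) {f : κ → ι}
    (hf : f.Injective) : IsSymplecticFamily B (p ∘ f) :=
  ⟨fun i ↦ hp.apply_eq_one (f i), fun _ _ hij ↦ hp.pairwise (hf.ne hij)⟩

lemma optionElim (hB : B.IsRefl) {q : M × M} (hq : B q.1 q.2 = 1) {p : ι → M × M}
    (hp : IsSymplecticFamily B p) (hqp : ∀ i, IsOrthoPair B q (p i)) :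
    IsSymplecticFamily B fun o : Option ι ↦ o.elim q p where
  apply_eq_one
    | none => hq
    | some i => hp.apply_eq_one i
  pairwise
    | none, none, h => absurd rfl h
    | none, some j, _ => hqp j
    | some i, none, _ => (hqp i).symm hB
    | some _, some _, h => hp.pairwise (mt (congrArg some) h)

end IsSymplecticFamily

/-- Relabelling the pairs of a symplectic family. -/
def symplecticFamilyCongr (B : BilinForm R M) (e : ι ≃ κ) :
    {p : ι → M × M // IsSymplecticFamily B p} ≃ {p : κ → M × M // IsSymplecticFamily B p} :=
  (e.arrowCongr (Equiv.refl _)).subtypeEquiv fun _ ↦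
    ⟨fun hp ↦ hp.comp_injective e.symm.injective,
      fun hp ↦ by simpa [Function.comp_def] using hp.comp_injective e.injective⟩

/-- Splitting off one pair `q` of a symplectic family: the other pairs form a symplectic family of
the orthogonal complement of the plane spanned by `q`. -/
def symplecticFamilyOptionEquiv {B : BilinForm R M} (hB : B.IsRefl) :
    {p : Option ι → M × M // IsSymplecticFamily B p} ≃
      Σ q : {q : M × M // B q.1 q.2 = 1},
        {p : ι → B.orthogonal (span R {q.1.1, q.1.2}) × B.orthogonal (span R {q.1.1, q.1.2}) //
          IsSymplecticFamily (B.restrict (B.orthogonal (span R {q.1.1, q.1.2}))) p} where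
  toFun p :=
    have mem_orthogonal (i : ι) := isOrthoPair_iff_mem_orthogonal.mp
      (p.2.pairwise (Option.some_ne_none i).symm)
    have rest := p.2.comp_injective (Option.some_injective ι)
    ⟨⟨p.1 none, p.2.apply_eq_one none⟩,
      ⟨fun i ↦ (⟨(p.1 (some i)).1, (mem_orthogonal i).1⟩, ⟨(p.1 (some i)).2, (mem_orthogonal i).2⟩),
        rest.apply_eq_one, rest.pairwise⟩⟩
  invFun s :=
    ⟨fun o ↦ o.elim s.1.1 fun i ↦ ((s.2.1 i).1, (s.2.1 i).2),
      .optionElim hB s.1.2 ⟨s.2.2.apply_eq_one, s.2.2.pairwise⟩ fun i ↦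
        isOrthoPair_iff_mem_orthogonal.mpr ⟨(s.2.1 i).1.2, (s.2.1 i).2.2⟩⟩
  left_inv _ := Subtype.ext <| funext fun | none => rfl | some _ => rfl
  right_inv _ := rfl

lemma natCard_symplecticFamily_of_isEmpty [IsEmpty ι] (B : BilinForm R M) :
    Nat.card {p : ι → M × M // IsSymplecticFamily B p} = 1 :=
  Nat.card_eq_one_iff_unique.mpr ⟨inferInstance,
    ⟨isEmptyElim, isEmptyElim, fun i ↦ isEmptyElim i⟩⟩

lemma forall_apply_eq_J_iff_isSymplecticFamily [DecidableEq ι] {B : BilinForm R M} (hB : B.IsAlt)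
    {v : ι ⊕ ι → M} :
    (∀ i j, B (v i) (v j) = J ι R i j) ↔
      IsSymplecticFamily B fun i ↦ (v (.inr i), v (.inl i)) := by
  constructor
  · intro h
    exact ⟨fun i ↦ by simp [h, J], fun i j hij ↦ by simp [IsOrthoPair, h, J, hij]⟩
  · intro h
    have inr_inl (i : ι) : B (v (.inr i)) (v (.inl i)) = 1 := h.apply_eq_one i
    have inl_inr (i : ι) : B (v (.inl i)) (v (.inr i)) = -1 := by rw [← hB.neg_eq, inr_inl]
    have ortho {i j : ι} (hij : i ≠ j) :
        IsOrthoPair B (v (.inr i), v (.inl i)) (v (.inr j), v (.inl j)) := h.pairwise hij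
    rintro (i | i) (j | j) <;> obtain rfl | hij := eq_or_ne i j
    · simp [J, hB.self_eq_zero]
    · simp [J, (ortho hij).2.2]
    · simp [J, inl_inr]
    · simp [J, hij, (ortho hij).1.2]
    · simp [J, inr_inl]
    · simp [J, hij, (ortho hij).2.1]
    · simp [J, hB.self_eq_zero]
    · simp [J, (ortho hij).1.1]

end SymplecticFamily

theorem natCard_symplecticFamily {K V ι : Type*} [Field K] [AddCommGroup V] [Module K V] [Finite V]
    [Finite ι] (B : BilinForm K V) (hB : B.Nondegenerate) (halt : B.IsAlt)
    (hV : finrank K V = 2 * Nat.card ι) :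
    Nat.card {p : ι → V × V // IsSymplecticFamily B p} =
      Nat.card K ^ Nat.card ι ^ 2 *
        ∏ j ∈ Finset.Icc 1 (Nat.card ι), (Nat.card K ^ (2 * j) - 1) := by
  induction ι using Finite.induction_empty_option generalizing V with
  | of_equiv e ih =>
    rw [← Nat.card_congr e] at hV ⊢
    rw [← Nat.card_congr (symplecticFamilyCongr B e), ih B hB halt hV]
  | h_empty =>
    simp [natCard_symplecticFamily_of_isEmpty]
  | @h_option ι _ ih =>
    have := Module.Finite.of_finite (R := K) (M := V)
    set n := Nat.card ι
    set Q := Nat.card K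
    have card_option : Nat.card (Option ι) = n + 1 := Finite.card_option
    rw [card_option] at hV ⊢
    have card_rest (q : {q : V × V // B q.1 q.2 = 1}) := ih
      (B.restrict (B.orthogonal (span K {q.1.1, q.1.2})))
      (nondegenerate_restrict_orthogonal hB halt.isRefl (disjoint_orthogonal_span_pair halt q.2))
      (fun x ↦ halt x) (by rw [finrank_orthogonal_span_pair hB halt q.2]; lia)
    have card_first : Nat.card {q : V × V // B q.1 q.2 = 1} =
        (Q ^ (2 * (n + 1)) - 1) * Q ^ (2 * n + 1) := by
      rw [natCard_pairs_apply_eq_one hB.1, Module.natCard_eq_pow_finrank (K := K), hV]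
      rfl
    rw [Nat.card_congr (symplecticFamilyOptionEquiv halt.isRefl),
      natCard_sigma_of_forall_eq card_rest, card_first, Finset.prod_Icc_succ_top n.succ_pos]
    ring

section SymplecticGroup

variable {l R : Type*} [Fintype l] [DecidableEq l] [CommRing R]

lemma toBilin'_J_apply (x y : l ⊕ l → R) :
    toBilin' (J l R) x y = (x ∘ Sum.inr) ⬝ᵥ (y ∘ Sum.inl) - (x ∘ Sum.inl) ⬝ᵥ (y ∘ Sum.inr) := by
  rw [toBilin'_apply', J, fromBlocks_mulVec]
  simp [dotProduct, neg_mulVec, sub_eq_neg_add]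

lemma isAlt_toBilin'_J : (toBilin' (J l R)).IsAlt := fun x ↦ by
  rw [toBilin'_J_apply, dotProduct_comm, sub_self]

lemma mem_symplecticGroup_iff_forall_toBilin' {A : Matrix (l ⊕ l) (l ⊕ l) R} :
    A ∈ symplecticGroup l R ↔ ∀ i j, toBilin' (J l R) (A.row i) (A.row j) = J l R i j := by
  simp only [SymplecticGroup.mem_iff, ← Matrix.ext_iff, mul_mul_apply, toBilin'_apply']
  rfl

/-- Arranging the rows of a `2l × 2l` matrix in pairs. The lower row comes first because the form
with matrix `J` takes the value `1`, and not `-1`, on the standard basis vectors in that order. -/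
def rowPairsEquiv (l R : Type*) :
    Matrix (l ⊕ l) (l ⊕ l) R ≃ (l → (l ⊕ l → R) × (l ⊕ l → R)) where
  toFun A i := (A.row (.inr i), A.row (.inl i))
  invFun p := .of (Sum.elim (fun i ↦ (p i).2) fun i ↦ (p i).1)
  left_inv _ := Matrix.ext fun | .inl _, _ => rfl | .inr _, _ => rfl

end SymplecticGroup

lemma Om_eq_J (m : ℕ) : Om m = J (Fin m) (ZMod 2) := by
  rw [Om, J, ZModModule.neg_eq_self]

theorem stmt12_general (l K : Type*) [Fintype l] [DecidableEq l] [Field K] [Finite K] :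
    Nat.card (symplecticGroup l K) =
      Nat.card K ^ Fintype.card l ^ 2 *
        ∏ j ∈ Finset.Icc 1 (Fintype.card l), (Nat.card K ^ (2 * j) - 1) := by
  have nondegenerate : (toBilin' (J l K)).Nondegenerate :=
    LinearMap.BilinForm.nondegenerate_toBilin'_of_det_ne_zero' _ (isUnit_det_J l K).ne_zero
  have finrank_eq : finrank K (l ⊕ l → K) = 2 * Nat.card l := by simp [two_mul]
  rw [← Nat.card_eq_fintype_card,
    ← natCard_symplecticFamily _ nondegenerate isAlt_toBilin'_J finrank_eq]
  exact Nat.card_congr ((rowPairsEquiv l K).subtypeEquiv fun _ ↦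
    mem_symplecticGroup_iff_forall_toBilin'.trans
      (forall_apply_eq_J_iff_isSymplecticFamily isAlt_toBilin'_J))

theorem stmt12 (m : ℕ) :
    {F : Matrix (Fin m ⊕ Fin m) (Fin m ⊕ Fin m) (ZMod 2) |
        F * Om m * Fᵀ = Om m}.ncard =
      2 ^ (m ^ 2) * ∏ j ∈ Finset.Icc 1 m, (4 ^ j - 1) := by
  rw [Om_eq_J, ← Nat.card_coe_set_eq]
  exact (stmt12_general (Fin m) (ZMod 2)).trans (by simp [pow_mul])
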